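/- Let d : V → ℕ be valid for c. Let f' : V × V → ℤ satisfy f'(u,v) = −f'(v,u) for all u, v, f'(u,v) ≤ c^R(u,v) for all (u,v) ∈ E^R, and f'(u,v) = 0 for all (u,v) ∉ E^R. Let d' : V → ℕ satisfy d'(v) = d(v) for all v ∉ R, d'(v) ≥ d(v) for all v ∈ R, and suppose d' is valid for the residual region capacity c^R − f' (i.e., d'(t) = 0 and d'(u) ≤ d'(v) + 1 whenever c^R(u,v) − f'(u,v) > 0). Then d' is valid for the global residual capacity c − f'; that is, d'(t) = 0 and d'(u) ≤ d'(v) + 1 whenever c(u,v) − f'(u,v) > 0. -/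

import Mathlib

open Classical

variable {V : Type*}

/-- The boundary of a region `R`: vertices outside `R ∪ {s, t}` connected by an edge
from some vertex of `R`. -/
def boundary (E : Set (V × V)) (R : Set V) (s t : V) : Set V :=
  {w | w ∉ R ∧ w ≠ s ∧ w ≠ t ∧ ∃ u ∈ R, (u, w) ∈ E}

/-- The region edge set
`E^R = (E ∩ ((R∪{s,t}) × (R∪{s,t}))) ∪ (E ∩ (R × B)) ∪ (E ∩ (B × R))`. -/
def regionEdges (E : Set (V × V)) (R : Set V) (s t : V) : Set (V × V) :=
  (E ∩ ((R ∪ {s, t}) ×ˢ (R ∪ {s, t}))) ∪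
    (E ∩ (R ×ˢ boundary E R s t)) ∪ (E ∩ (boundary E R s t ×ˢ R))

/-- The region capacity: `c` on region edges except incoming boundary edges
(which are zeroed), `0` elsewhere. -/
noncomputable def regionCap (E : Set (V × V)) (R : Set V) (s t : V)
    (c : V → V → ℕ) (u v : V) : ℕ :=
  if (u, v) ∈ regionEdges E R s t ∧ ¬(u ∈ boundary E R s t ∧ v ∈ R) then c u v else 0

/-- A labeling `d` is valid for an (integer-valued) capacity `g` with sink `t` if
`d t = 0` and `d u ≤ d v + 1` whenever `g u v > 0`. -/
def ValidFor (t : V) (g : V → V → ℤ) (d : V → ℕ) : Prop :=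
  d t = 0 ∧ ∀ u v : V, 0 < g u v → d u ≤ d v + 1

/-!
Zeroing the incoming boundary edges leaves the capacity of every edge that starts in `R` unchanged,
so on those edges the two residual capacities coincide. On an edge `(u, v)` with `u ∉ R` there are
two cases. If `c u v > 0`, then `d' u = d u ≤ d v + 1 ≤ d' v + 1`. If `c u v = 0`, a positive
residual capacity means `f' u v < 0`, and then the residual region capacity is positive as well.
-/

theorem mem_regionEdges_of_mem_left {E : Set (V × V)} {R : Set V} {s t u v : V}
    (huv : (u, v) ∈ E) (hu : u ∈ R) : (u, v) ∈ regionEdges E R s t := by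
  by_cases hv : v ∈ R ∪ {s, t}
  · exact Or.inl (Or.inl ⟨huv, Or.inl hu, hv⟩)
  · simp only [Set.mem_union, Set.mem_insert_iff, Set.mem_singleton_iff, not_or] at hv
    obtain ⟨hvR, hvs, hvt⟩ := hv
    exact Or.inl (Or.inr ⟨huv, hu, hvR, hvs, hvt, u, hu, huv⟩)

theorem regionCap_eq_of_mem_left {E : Set (V × V)} {R : Set V} {s t u v : V} {c : V → V → ℕ}
    (hcE : (u, v) ∉ E → c u v = 0) (hu : u ∈ R) : regionCap E R s t c u v = c u v := by
  by_cases huv : (u, v) ∈ E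
  · exact if_pos ⟨mem_regionEdges_of_mem_left huv hu, fun h => h.1.1 hu⟩
  · rw [regionCap, hcE huv, ite_self]

namespace ValidFor

variable {t : V} {R : Set V} {g h f : V → V → ℤ} {d d' : V → ℕ}

theorem le_add_one_of_le {u v : V} (hd : ValidFor t g d) (hu : d' u ≤ d u) (hv : d v ≤ d' v)
    (hpos : 0 < g u v) : d' u ≤ d' v + 1 :=
  calc
    d' u ≤ d u := hu
    _ ≤ d v + 1 := hd.2 u v hpos
    _ ≤ d' v + 1 := Nat.add_le_add_right hv 1

theorem sub_of_eq_on_left (hh : ∀ u ∉ R, ∀ v, 0 ≤ h u v) (heq : ∀ u ∈ R, ∀ v, h u v = g u v)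
    (hd : ValidFor t g d) (hle : ∀ v, d v ≤ d' v) (hout : ∀ v ∉ R, d' v ≤ d v)
    (hd' : ValidFor t (fun u v => h u v - f u v) d') :
    ValidFor t (fun u v => g u v - f u v) d' := by
  refine ⟨hd'.1, fun u v (hres : 0 < g u v - f u v) => ?_⟩
  by_cases hu : u ∈ R
  · have hres' : 0 < h u v - f u v := by rwa [heq u hu v]
    exact hd'.2 u v hres'
  · rcases lt_or_ge 0 (g u v) with hpos | hnonpos
    · exact hd.le_add_one_of_le (hout u hu) (hle v) hpos
    · have hf : f u v < 0 := by linarith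
      exact hd'.2 u v (sub_pos.mpr (hf.trans_le (hh u hu v)))

end ValidFor

theorem stmt8_general (E : Set (V × V)) (c : V → V → ℕ)
    (hcE : ∀ u v : V, (u, v) ∉ E → c u v = 0) (s t : V) (R : Set V)
    (d d' : V → ℕ) (f' : V → V → ℤ)
    (hd : ValidFor t (fun u v => (c u v : ℤ)) d)
    (hd'out : ∀ v ∉ R, d' v = d v)
    (hd'R : ∀ v ∈ R, d v ≤ d' v)
    (hd'valid : ValidFor t (fun u v => (regionCap E R s t c u v : ℤ) - f' u v) d') :
    ValidFor t (fun u v => (c u v : ℤ) - f' u v) d' := by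
  have hle : ∀ v, d v ≤ d' v := fun v =>
    if hv : v ∈ R then hd'R v hv else (hd'out v hv).ge
  have heq : ∀ u ∈ R, ∀ v, (regionCap E R s t c u v : ℤ) = c u v := fun u hu v =>
    congrArg Nat.cast (regionCap_eq_of_mem_left (hcE u v) hu)
  exact ValidFor.sub_of_eq_on_left (fun _ _ _ => Int.natCast_nonneg _) heq hd hle
    (fun v hv => (hd'out v hv).le) hd'valid

/-- If `d` is valid for `c`, `f'` is an antisymmetric flow in the region network
(respecting region capacities, zero outside region edges) and `d'` agrees with `d`
outside `R`, dominates `d` on `R`, and is valid for the residual region capacity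
`c^R − f'`, then `d'` is valid for the global residual capacity `c − f'`. -/
theorem stmt8 (E : Set (V × V)) (hEsym : ∀ u v : V, (u, v) ∈ E → (v, u) ∈ E)
    (c : V → V → ℕ) (hcE : ∀ u v : V, (u, v) ∉ E → c u v = 0)
    (s t : V) (hst : s ≠ t)
    (R : Set V) (hsR : s ∉ R) (htR : t ∉ R)
    (d d' : V → ℕ) (f' : V → V → ℤ)
    (hd : ValidFor t (fun u v => (c u v : ℤ)) d)
    (hanti : ∀ u v : V, f' u v = -f' v u)
    (hcap : ∀ u v : V, (u, v) ∈ regionEdges E R s t →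
      f' u v ≤ (regionCap E R s t c u v : ℤ))
    (hzero : ∀ u v : V, (u, v) ∉ regionEdges E R s t → f' u v = 0)
    (hd'out : ∀ v ∉ R, d' v = d v)
    (hd'R : ∀ v ∈ R, d v ≤ d' v)
    (hd'valid : ValidFor t (fun u v => (regionCap E R s t c u v : ℤ) - f' u v) d') :
    ValidFor t (fun u v => (c u v : ℤ) - f' u v) d' := by
  exact stmt8_general E c hcE s t R d d' f' hd hd'out hd'R hd'valid
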